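/- arXiv:1901.09295 — 2 statements merged into one kernel-verified Lean document; each statement's English description precedes it below -/
import Mathlib

section
/- Let δ > 0. For every (u,t) ∈ ℝ², the first coordinate of the cross product r̂_u(u,t) × r̂_t(u,t) equals δ·cos(u/2)·sin u and the second coordinate equals −δ²·cos²(u/2)·cos u. Consequently, for every (u,t) in the open rectangle (−π,π) × (0,1), r̂_u(u,t) × r̂_t(u,t) ≠ (0,0,0). -/
open Real Set

noncomputable def dot3 (a b : Fin 3 → ℝ) : ℝ := a 0 * b 0 + a 1 * b 1 + a 2 * b 2

noncomputable def cross3 (a b : Fin 3 → ℝ) : Fin 3 → ℝ :=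
  ![a 1 * b 2 - a 2 * b 1, a 2 * b 0 - a 0 * b 2, a 0 * b 1 - a 1 * b 0]

noncomputable def pdu {E : Type*} [NormedAddCommGroup E] [NormedSpace ℝ E]
    (f : ℝ × ℝ → E) (p : ℝ × ℝ) : E := fderiv ℝ f p (1, 0)

noncomputable def pdv {E : Type*} [NormedAddCommGroup E] [NormedSpace ℝ E]
    (f : ℝ × ℝ → E) (p : ℝ × ℝ) : E := fderiv ℝ f p (0, 1)

noncomputable def curl3 (F : (Fin 3 → ℝ) → (Fin 3 → ℝ)) (q : Fin 3 → ℝ) : Fin 3 → ℝ :=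
  ![fderiv ℝ F q (Pi.single 1 1) 2 - fderiv ℝ F q (Pi.single 2 1) 1,
    fderiv ℝ F q (Pi.single 2 1) 0 - fderiv ℝ F q (Pi.single 0 1) 2,
    fderiv ℝ F q (Pi.single 0 1) 1 - fderiv ℝ F q (Pi.single 1 1) 0]

noncomputable def lineInt (P Q : ℝ × ℝ → ℝ) (a b c d : ℝ) : ℝ :=
  (∫ u in a..b, P (u, c)) + (∫ v in c..d, Q (b, v))
    - (∫ u in a..b, P (u, d)) - (∫ v in c..d, Q (a, v))

noncomputable def mob (p : ℝ × ℝ) : Fin 3 → ℝ :=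
  ![(1 + p.2 * Real.cos (p.1 / 2)) * Real.cos p.1,
    (1 + p.2 * Real.cos (p.1 / 2)) * Real.sin p.1,
    p.2 * Real.sin (p.1 / 2)]

noncomputable def rhat (δ : ℝ) (p : ℝ × ℝ) : Fin 3 → ℝ :=
  (1 - p.2) • mob (p.1, δ) + p.2 • mob (2 * π - p.1, δ)

/-!
The curve `t ↦ r̂(u, t)` is the segment from `r(u, δ)` to `r(2π - u, δ)`. These endpoints have
the same height `δ sin (u / 2)`, so `r̂_t` is horizontal and the first two coordinates of
`r̂_u × r̂_t` involve only the third coordinate of `r̂_u`. Unless `δ cos (u / 2) = 0`, they are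
nonzero multiples of `sin u` and `cos u`, which have no common zero.
-/

section PartialDerivatives

variable {E : Type*} [NormedAddCommGroup E] [NormedSpace ℝ E]

theorem pdu_eq_of_hasDerivAt {f : ℝ × ℝ → E} {u v : ℝ} {f' : E}
    (hf : DifferentiableAt ℝ f (u, v)) (hu : HasDerivAt (fun x => f (x, v)) f' u) :
    pdu f (u, v) = f' :=
  (hf.hasFDerivAt.comp_hasDerivAt u
    ((hasDerivAt_id u).prodMk (hasDerivAt_const u v))).unique hu

theorem pdv_eq_of_hasDerivAt {f : ℝ × ℝ → E} {u v : ℝ} {f' : E}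
    (hf : DifferentiableAt ℝ f (u, v)) (hv : HasDerivAt (fun y => f (u, y)) f' v) :
    pdv f (u, v) = f' :=
  (hf.hasFDerivAt.comp_hasDerivAt v
    ((hasDerivAt_const v u).prodMk (hasDerivAt_id v))).unique hv

theorem pdu_apply {ι : Type*} [Fintype ι] {f : ℝ × ℝ → ι → E} {p : ℝ × ℝ}
    (hf : DifferentiableAt ℝ f p) (i : ι) : pdu f p i = pdu (fun q => f q i) p := by
  simp only [pdu, fderiv_apply hf, ContinuousLinearMap.comp_apply, ContinuousLinearMap.proj_apply]

end PartialDerivatives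

theorem cross3_zero_right (a : Fin 3 → ℝ) : cross3 a 0 = 0 := by
  ext i
  fin_cases i <;> simp [cross3]

theorem differentiable_mob : Differentiable ℝ mob := by
  rw [differentiable_pi]
  intro i
  fin_cases i <;>
    simp only [mob, Fin.zero_eta, Fin.mk_one, Fin.reduceFinMk, Matrix.cons_val] <;>
    fun_prop

theorem mob_two_pi_sub (u v : ℝ) :
    mob (2 * π - u, v) =
      ![(1 - v * cos (u / 2)) * cos u, -((1 - v * cos (u / 2)) * sin u), v * sin (u / 2)] := by
  have half_angle : (2 * π - u) / 2 = π - u / 2 := by ring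
  simp only [mob, half_angle, cos_pi_sub, sin_pi_sub, cos_two_pi_sub, sin_two_pi_sub,
    mul_neg, ← sub_eq_add_neg]

theorem rhat_eq_lineMap (δ u t : ℝ) :
    rhat δ (u, t) = AffineMap.lineMap (mob (u, δ)) (mob (2 * π - u, δ)) t :=
  (AffineMap.lineMap_apply_module _ _ _).symm

theorem differentiable_rhat (δ : ℝ) : Differentiable ℝ (rhat δ) := by
  have := differentiable_mob
  unfold rhat
  fun_prop

theorem rhat_apply_two (δ u t : ℝ) : rhat δ (u, t) 2 = δ * sin (u / 2) := by
  rw [rhat, mob_two_pi_sub]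
  simp only [mob, Pi.add_apply, Pi.smul_apply, Matrix.cons_val, smul_eq_mul]
  ring

theorem pdu_rhat_apply_two (δ u t : ℝ) : pdu (rhat δ) (u, t) 2 = δ * cos (u / 2) / 2 := by
  rw [pdu_apply (differentiable_rhat δ _)]
  refine pdu_eq_of_hasDerivAt (differentiable_pi.1 (differentiable_rhat δ) 2 _) ?_
  simp only [rhat_apply_two]
  exact (((hasDerivAt_id' u).div_const 2).sin.const_mul δ).congr_deriv (by ring)

theorem pdv_rhat_eq_sub (δ u t : ℝ) :
    pdv (rhat δ) (u, t) = mob (2 * π - u, δ) - mob (u, δ) := by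
  refine pdv_eq_of_hasDerivAt (differentiable_rhat δ _) ?_
  simp only [rhat_eq_lineMap]
  exact AffineMap.hasDerivAt_lineMap

theorem pdv_rhat (δ u t : ℝ) :
    pdv (rhat δ) (u, t) = ![-2 * δ * cos (u / 2) * cos u, -2 * sin u, 0] := by
  rw [pdv_rhat_eq_sub, mob_two_pi_sub]
  ext i
  fin_cases i <;> simp [mob] <;> ring

theorem cross3_pdu_pdv_rhat_apply_zero (δ u t : ℝ) :
    cross3 (pdu (rhat δ) (u, t)) (pdv (rhat δ) (u, t)) 0 = δ * cos (u / 2) * sin u := by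
  simp only [cross3, pdv_rhat, pdu_rhat_apply_two, Matrix.cons_val]
  ring

theorem cross3_pdu_pdv_rhat_apply_one (δ u t : ℝ) :
    cross3 (pdu (rhat δ) (u, t)) (pdv (rhat δ) (u, t)) 1 =
      -δ ^ 2 * cos (u / 2) ^ 2 * cos u := by
  simp only [cross3, pdv_rhat, pdu_rhat_apply_two, Matrix.cons_val]
  ring

theorem pdv_rhat_eq_zero_of_cos_half_eq_zero (δ t : ℝ) {u : ℝ} (hu : cos (u / 2) = 0) :
    pdv (rhat δ) (u, t) = 0 := by
  have sin_u : sin u = 0 := by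
    rw [← mul_div_cancel₀ u (two_ne_zero' ℝ), sin_two_mul, hu, mul_zero]
  simp [pdv_rhat, hu, sin_u]

theorem cross3_pdu_pdv_rhat_eq_zero_iff {δ : ℝ} (hδ : δ ≠ 0) (u t : ℝ) :
    cross3 (pdu (rhat δ) (u, t)) (pdv (rhat δ) (u, t)) = 0 ↔ cos (u / 2) = 0 := by
  refine ⟨fun cross_eq_zero => ?_, fun hu => ?_⟩
  · by_contra hu
    have sin_u : sin u = 0 := by
      simpa [cross_eq_zero, hδ, hu] using cross3_pdu_pdv_rhat_apply_zero δ u t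
    have cos_u : cos u = 0 := by
      simpa [cross_eq_zero, hδ, hu] using cross3_pdu_pdv_rhat_apply_one δ u t
    simpa [sin_u, cos_u] using sin_sq_add_cos_sq u
  · rw [pdv_rhat_eq_zero_of_cos_half_eq_zero δ t hu, cross3_zero_right]

theorem cos_half_ne_zero_of_mem_Ioo {u : ℝ} (hu : u ∈ Ioo (-π) π) : cos (u / 2) ≠ 0 :=
  (cos_pos_of_mem_Ioo ⟨by linarith [hu.1], by linarith [hu.2]⟩).ne'

theorem stmt13_general (δ : ℝ) :
    (∀ u t : ℝ,
      cross3 (pdu (rhat δ) (u, t)) (pdv (rhat δ) (u, t)) 0 = δ * cos (u / 2) * sin u ∧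
      cross3 (pdu (rhat δ) (u, t)) (pdv (rhat δ) (u, t)) 1 =
        -δ ^ 2 * cos (u / 2) ^ 2 * cos u) ∧
    (δ ≠ 0 → ∀ u t : ℝ,
      cross3 (pdu (rhat δ) (u, t)) (pdv (rhat δ) (u, t)) = 0 ↔ cos (u / 2) = 0) :=
  ⟨fun u t => ⟨cross3_pdu_pdv_rhat_apply_zero δ u t, cross3_pdu_pdv_rhat_apply_one δ u t⟩,
    cross3_pdu_pdv_rhat_eq_zero_iff⟩

theorem stmt13 (δ : ℝ) (hδ : 0 < δ) :
    (∀ u t : ℝ,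
      cross3 (pdu (rhat δ) (u, t)) (pdv (rhat δ) (u, t)) 0
          = δ * Real.cos (u / 2) * Real.sin u ∧
      cross3 (pdu (rhat δ) (u, t)) (pdv (rhat δ) (u, t)) 1
          = -δ ^ 2 * Real.cos (u / 2) ^ 2 * Real.cos u) ∧
    ∀ p ∈ (Set.Ioo (-π) π) ×ˢ (Set.Ioo (0 : ℝ) 1),
      cross3 (pdu (rhat δ) p) (pdv (rhat δ) p) ≠ ![0, 0, 0] := by
  refine ⟨(stmt13_general δ).1, fun ⟨u, t⟩ ⟨hu, _⟩ cross_eq_zero => ?_⟩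
  exact cos_half_ne_zero_of_mem_Ioo hu
    (((stmt13_general δ).2 hδ.ne' u t).1 (cross_eq_zero.trans (by simp)))
end

section
/- Let 0 < δ < 1. Then for every point p ∈ r̂(∂D̂) (the boundary curve of the Möbius strip), the first two coordinates of p are not both zero; that is, the curve r̂(∂D̂) does not intersect the z-axis. -/
open Real Set

/-!
On the edges `t = 0` and `t = 1` the point is some `mob (w, δ)`, whose distance to the `z`-axis is
`|1 + δ cos (w / 2)|`, which is positive because `|δ| < 1`. On the edges `u = ±π` the factor
`cos (u / 2)` vanishes, so the first coordinate is `cos u = -1` whatever `t` is.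
-/

theorem frontier_Icc_prod_Icc {α β : Type*}
    [TopologicalSpace α] [LinearOrder α] [OrderTopology α] [DenselyOrdered α] [NoMinOrder α]
    [NoMaxOrder α] [TopologicalSpace β] [LinearOrder β] [OrderTopology β] [DenselyOrdered β]
    [NoMinOrder β] [NoMaxOrder β] {a b : α} {c d : β} (hab : a ≤ b) (hcd : c ≤ d) :
    frontier (Icc a b ×ˢ Icc c d) = Icc a b ×ˢ {c, d} ∪ {a, b} ×ˢ Icc c d := by
  rw [frontier_prod_eq, frontier_Icc hab, frontier_Icc hcd, isClosed_Icc.closure_eq,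
    isClosed_Icc.closure_eq]

theorem one_add_mul_cos_pos {v : ℝ} (hv : |v| < 1) (x : ℝ) : 0 < 1 + v * cos x := by
  have abs_lt_one : |v * cos x| < 1 := by
    rw [abs_mul]
    exact mul_lt_one_of_nonneg_of_lt_one_left (abs_nonneg v) hv (abs_cos_le_one x)
  linarith [neg_lt_of_abs_lt abs_lt_one]

/-- The `z`-axis of `ℝ³`, which the boundary curve of the Möbius strip has to avoid. -/
def zAxis : Set (Fin 3 → ℝ) := {q | q 0 = 0 ∧ q 1 = 0}

theorem mem_zAxis_iff_sq_add_sq_eq_zero (q : Fin 3 → ℝ) :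
    q ∈ zAxis ↔ q 0 ^ 2 + q 1 ^ 2 = 0 := by
  rw [add_eq_zero_iff_of_nonneg (sq_nonneg _) (sq_nonneg _), sq_eq_zero_iff, sq_eq_zero_iff]
  rfl

theorem mob_sq_add_sq (u v : ℝ) :
    mob (u, v) 0 ^ 2 + mob (u, v) 1 ^ 2 = (1 + v * cos (u / 2)) ^ 2 := by
  simp only [mob, Matrix.cons_val_zero, Matrix.cons_val_one]
  linear_combination (1 + v * cos (u / 2)) ^ 2 * sin_sq_add_cos_sq u

theorem mob_mem_zAxis_iff (u v : ℝ) : mob (u, v) ∈ zAxis ↔ 1 + v * cos (u / 2) = 0 := by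
  rw [mem_zAxis_iff_sq_add_sq_eq_zero, mob_sq_add_sq, sq_eq_zero_iff]

theorem mob_notMem_zAxis {v : ℝ} (hv : |v| < 1) (u : ℝ) : mob (u, v) ∉ zAxis :=
  fun h => (one_add_mul_cos_pos hv (u / 2)).ne' ((mob_mem_zAxis_iff u v).mp h)

theorem rhat_zero_right (δ u : ℝ) : rhat δ (u, 0) = mob (u, δ) := by
  simp [rhat]

theorem rhat_one_right (δ u : ℝ) : rhat δ (u, 1) = mob (2 * π - u, δ) := by
  simp [rhat]

theorem rhat_apply_zero (δ u t : ℝ) :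
    rhat δ (u, t) 0 = (1 + (1 - 2 * t) * δ * cos (u / 2)) * cos u := by
  have cos_half_reflected : cos ((2 * π - u) / 2) = -cos (u / 2) := by
    rw [← cos_pi_sub]
    ring_nf
  simp only [rhat, mob, Pi.add_apply, Pi.smul_apply, smul_eq_mul, Matrix.cons_val_zero,
    cos_two_pi_sub, cos_half_reflected]
  ring

theorem rhat_notMem_zAxis_of_cos_half_eq_zero {u : ℝ} (hu : cos (u / 2) = 0) (δ t : ℝ) :
    rhat δ (u, t) ∉ zAxis := by
  have cos_eq_neg_one : cos u = -1 := calc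
    cos u = cos (2 * (u / 2)) := by rw [mul_div_cancel₀ u two_ne_zero]
    _ = 2 * cos (u / 2) ^ 2 - 1 := cos_two_mul _
    _ = -1 := by simp [hu]
  rintro ⟨h, -⟩
  simp [rhat_apply_zero, hu, cos_eq_neg_one] at h

theorem stmt18 (δ : ℝ) (hδ0 : 0 < δ) (hδ1 : δ < 1) :
    ∀ p ∈ rhat δ '' frontier ((Set.Icc (-π) π) ×ˢ (Set.Icc (0 : ℝ) 1)),
      ¬(p 0 = 0 ∧ p 1 = 0) := by
  have abs_δ_lt_one : |δ| < 1 := by rwa [abs_of_pos hδ0]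
  rintro _ ⟨⟨u, t⟩, h, rfl⟩
  change rhat δ (u, t) ∉ zAxis
  rw [frontier_Icc_prod_Icc (neg_le_self pi_pos.le) zero_le_one] at h
  obtain ⟨-, rfl | rfl⟩ | ⟨rfl | rfl, -⟩ := h
  · rw [rhat_zero_right]
    exact mob_notMem_zAxis abs_δ_lt_one u
  · rw [rhat_one_right]
    exact mob_notMem_zAxis abs_δ_lt_one (2 * π - u)
  · exact rhat_notMem_zAxis_of_cos_half_eq_zero (by simp [neg_div]) δ t
  · exact rhat_notMem_zAxis_of_cos_half_eq_zero cos_pi_div_two δ t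
end
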